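/- Let ε ∈ (0,1), v̄ > 0, s̄ > 0, c_d ∈ ℝ, η > 0, ξ > 0 with ηξ > 1, R ∈ ℝ, α_s ≥ 0, β_s ≥ 0, θ ∈ [0,1], and T ≥ 0. Define v*(s), g(v,s), F_s(s), A₀, A₁ and s* as follows: v*(s) = [(1−ε)(ηξ−1)·v̄·s − ε·s̄·(s − c_d)] / (2ε(1−ηξ)·s̄), g(v,s) = ε·v/v̄ + (1−ε)·s/s̄, F_s(s) = (R + α_s·θ + β_s − v*(s) − s)·g(v*(s), s), A₀ = ε/v̄ + (ηξ−1)(ε−1)/s̄, A₁ = 2(ηξ−1), s* = (R + α_s·θ + β_s + c_d/A₁) / (2·(v̄·A₀/(ε·A₁) + 1)) + c_d·ε / (2·v̄·A₁·(A₀/A₁ − (ε−1)/s̄)), and assume v̄·A₀/(ε·A₁) + 1 > 0. Then for every function s : ℝ → ℝ such that t ↦ F_s(s(t)) is integrable on [0,T], the server's expected utility satisfies ∫₀ᵀ F_s(s(t)) dt ≤ T · F_s(s*). -/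

import Mathlib

open intervalIntegral MeasureTheory

/-!
The device's rule `v*` is affine in `s`, hence so are the server's margin `ρ - v*(s) - s` and the
collection probability `g(v*(s), s)`. The payoff `F_s` is therefore a product of two affine
functions, one decreasing and one increasing, that is, a concave quadratic. Its maximum lies halfway
between its two roots, and the paper's `s*` is exactly this midpoint. The pointwise bound
`F_s(s(t)) ≤ F_s(s*)` is then integrated over `[0, T]`.
-/

theorem affine_mul_affine_eq_sub_sq {K : Type*} [Field K] [NeZero (2 : K)] {m b : K}
    (hm : m ≠ 0) (hb : b ≠ 0) (p q x : K) :
    (p - m * x) * (b * x - q) =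
      (p - m * (p / (2 * m) + q / (2 * b))) * (b * (p / (2 * m) + q / (2 * b)) - q) -
        m * b * (x - (p / (2 * m) + q / (2 * b))) ^ 2 := by
  field_simp
  ring

theorem affine_mul_affine_le_at_midpoint {K : Type*} [Field K] [LinearOrder K]
    [IsStrictOrderedRing K] {m b : K} (hmb : 0 < m * b) (p q x : K) :
    (p - m * x) * (b * x - q) ≤
      (p - m * (p / (2 * m) + q / (2 * b))) * (b * (p / (2 * m) + q / (2 * b)) - q) := by
  rw [affine_mul_affine_eq_sub_sq (left_ne_zero_of_mul hmb.ne') (right_ne_zero_of_mul hmb.ne')]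
  exact sub_le_self _ (by positivity)

theorem intervalIntegral_le_sub_mul_of_le {f : ℝ → ℝ} {a b C : ℝ} (hab : a ≤ b)
    (hf : IntervalIntegrable f volume a b) (hC : ∀ t ∈ Set.Icc a b, f t ≤ C) :
    ∫ t in a..b, f t ≤ (b - a) * C :=
  calc ∫ t in a..b, f t ≤ ∫ _ in a..b, C := integral_mono_on hab hf intervalIntegrable_const hC
    _ = (b - a) * C := by rw [intervalIntegral.integral_const, smul_eq_mul]

namespace DataSubmissionGame

/-- The successful data collection probability `g(v, s)`. -/
noncomputable def collectionProb (ε vb sb v s : ℝ) : ℝ :=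
  ε * v / vb + (1 - ε) * s / sb

/-- The device's game rule `v*(s)`. The cost scalars enter only through `κ = ηξ`. -/
noncomputable def gameRule (ε vb sb cd κ s : ℝ) : ℝ :=
  ((1 - ε) * (κ - 1) * vb * s - ε * sb * (s - cd)) / (2 * ε * (1 - κ) * sb)

/-- The server's payoff rate `F_s(s)` against the game rule, where `ρ = R + α_s θ + β_s` is the
total reward. -/
noncomputable def serverPayoff (ε vb sb cd κ ρ s : ℝ) : ℝ :=
  (ρ - gameRule ε vb sb cd κ s - s) * collectionProb ε vb sb (gameRule ε vb sb cd κ s) s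

/-- The paper's constant `A₀`, with `κ = ηξ`. -/
noncomputable def A₀ (ε vb sb κ : ℝ) : ℝ :=
  ε / vb + (κ - 1) * (ε - 1) / sb

/-- The paper's constant `A₁`, with `κ = ηξ`. -/
def A₁ (κ : ℝ) : ℝ :=
  2 * (κ - 1)

/-- The slope of the affine function `s ↦ v*(s)`. -/
noncomputable def ruleSlope (ε vb sb κ : ℝ) : ℝ :=
  vb * A₀ ε vb sb κ / (ε * A₁ κ)

/-- The slope of the affine function `s ↦ g(v*(s), s)`. -/
noncomputable def probSlope (ε vb sb κ : ℝ) : ℝ :=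
  A₀ ε vb sb κ / A₁ κ - (ε - 1) / sb

/-- The server's optimal strategy `s*`, for the total reward `ρ = R + α_s θ + β_s`. -/
noncomputable def optimalStrategy (ε vb sb cd κ ρ : ℝ) : ℝ :=
  (ρ + cd / A₁ κ) / (2 * (ruleSlope ε vb sb κ + 1)) +
    cd * ε / (2 * vb * A₁ κ * probSlope ε vb sb κ)

section

variable {ε vb sb κ : ℝ}

theorem gameRule_eq_affine (hε : ε ≠ 0) (hvb : vb ≠ 0) (hsb : sb ≠ 0) (cd s : ℝ) :
    gameRule ε vb sb cd κ s = ruleSlope ε vb sb κ * s - cd / A₁ κ := by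
  rw [gameRule, ruleSlope, A₀, A₁, ← neg_sub κ 1]
  field_simp
  ring

theorem collectionProb_gameRule_eq_affine (hε : ε ≠ 0) (hvb : vb ≠ 0) (hsb : sb ≠ 0) (cd s : ℝ) :
    collectionProb ε vb sb (gameRule ε vb sb cd κ s) s =
      probSlope ε vb sb κ * s - cd * ε / (vb * A₁ κ) := by
  rw [gameRule_eq_affine hε hvb hsb, collectionProb, probSlope]
  have h_slope : ε * ruleSlope ε vb sb κ / vb = A₀ ε vb sb κ / A₁ κ := by
    rw [ruleSlope]
    field_simp
  linear_combination s * h_slope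

theorem serverPayoff_eq_affine_mul_affine (hε : ε ≠ 0) (hvb : vb ≠ 0) (hsb : sb ≠ 0)
    (cd ρ s : ℝ) :
    serverPayoff ε vb sb cd κ ρ s =
      (ρ + cd / A₁ κ - (ruleSlope ε vb sb κ + 1) * s) *
        (probSlope ε vb sb κ * s - cd * ε / (vb * A₁ κ)) := by
  rw [serverPayoff, collectionProb_gameRule_eq_affine hε hvb hsb,
    gameRule_eq_affine hε hvb hsb]
  ring

theorem optimalStrategy_eq_midpoint (ε vb sb cd κ ρ : ℝ) :
    optimalStrategy ε vb sb cd κ ρ =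
      (ρ + cd / A₁ κ) / (2 * (ruleSlope ε vb sb κ + 1)) +
        cd * ε / (vb * A₁ κ) / (2 * probSlope ε vb sb κ) := by
  rw [optimalStrategy, div_div, mul_assoc 2 vb, mul_assoc 2, mul_left_comm 2]

theorem serverPayoff_le_optimalStrategy (hε : ε ≠ 0) (hvb : vb ≠ 0) (hsb : sb ≠ 0)
    (h_concave : 0 < (ruleSlope ε vb sb κ + 1) * probSlope ε vb sb κ) (cd ρ s : ℝ) :
    serverPayoff ε vb sb cd κ ρ s ≤
      serverPayoff ε vb sb cd κ ρ (optimalStrategy ε vb sb cd κ ρ) := by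
  simp only [serverPayoff_eq_affine_mul_affine hε hvb hsb, optimalStrategy_eq_midpoint]
  exact affine_mul_affine_le_at_midpoint h_concave _ _ s

theorem probSlope_eq_add (ε vb sb : ℝ) (hκ : κ ≠ 1) :
    probSlope ε vb sb κ = ε / (2 * (κ - 1) * vb) + (1 - ε) / (2 * sb) := by
  rw [probSlope, A₀, A₁]
  field_simp
  ring

theorem probSlope_pos (hε₀ : 0 < ε) (hε₁ : ε ≤ 1) (hvb : 0 < vb) (hsb : 0 < sb) (hκ : 1 < κ) :
    0 < probSlope ε vb sb κ := by
  have : 0 < κ - 1 := sub_pos.2 hκ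
  have : 0 ≤ 1 - ε := sub_nonneg.2 hε₁
  rw [probSlope_eq_add ε vb sb hκ.ne']
  positivity

end

end DataSubmissionGame

open DataSubmissionGame

/-- The constant strategy `s ≡ s*` maximizes the server's expected
utility `U_s = ∫₀ᵀ F_s(s(t)) dt` over all strategies with integrable payoff. -/
theorem constant_sstar_maximizes_Us
    (ε vb sb cd η ξ R αs βs θ T : ℝ)
    (hε : ε ∈ Set.Ioo (0:ℝ) 1) (hvb : 0 < vb) (hsb : 0 < sb)
    (hη : 0 < η) (hξ : 0 < ξ) (hηξ : 1 < η * ξ)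
    (hαs : 0 ≤ αs) (hβs : 0 ≤ βs) (hθ : θ ∈ Set.Icc (0:ℝ) 1) (hT : 0 ≤ T)
    (vstar : ℝ → ℝ) (g : ℝ → ℝ → ℝ) (Fs : ℝ → ℝ) (A0 A1 sstar : ℝ)
    (hvstar : ∀ s, vstar s = ((1 - ε) * (η * ξ - 1) * vb * s - ε * sb * (s - cd)) /
      (2 * ε * (1 - η * ξ) * sb))
    (hg : ∀ v s, g v s = ε * v / vb + (1 - ε) * s / sb)
    (hFs : ∀ s, Fs s = (R + αs * θ + βs - vstar s - s) * g (vstar s) s)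
    (hA0 : A0 = ε / vb + (η * ξ - 1) * (ε - 1) / sb)
    (hA1 : A1 = 2 * (η * ξ - 1))
    (hpos : vb * A0 / (ε * A1) + 1 > 0)
    (hsstar : sstar = (R + αs * θ + βs + cd / A1) / (2 * (vb * A0 / (ε * A1) + 1))
      + cd * ε / (2 * vb * A1 * (A0 / A1 - (ε - 1) / sb))) :
    ∀ sfun : ℝ → ℝ, IntegrableOn (fun t => Fs (sfun t)) (Set.Icc 0 T) →
      ∫ t in (0:ℝ)..T, Fs (sfun t) ≤ T * Fs sstar := by
  intro sfun h_int
  obtain rfl : vstar = gameRule ε vb sb cd (η * ξ) := funext hvstar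
  obtain rfl : g = collectionProb ε vb sb := funext₂ hg
  obtain rfl : Fs = serverPayoff ε vb sb cd (η * ξ) (R + αs * θ + βs) := funext hFs
  obtain rfl : A0 = A₀ ε vb sb (η * ξ) := hA0
  obtain rfl : A1 = A₁ (η * ξ) := hA1
  obtain rfl : sstar = optimalStrategy ε vb sb cd (η * ξ) (R + αs * θ + βs) := hsstar
  have h_concave : 0 < (ruleSlope ε vb sb (η * ξ) + 1) * probSlope ε vb sb (η * ξ) :=
    mul_pos hpos (probSlope_pos hε.1 hε.2.le hvb hsb hηξ)
  have h_integrable := (intervalIntegrable_iff_integrableOn_Icc_of_le hT).2 h_int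
  simpa only [sub_zero] using intervalIntegral_le_sub_mul_of_le hT h_integrable fun t _ =>
    serverPayoff_le_optimalStrategy hε.1.ne' hvb.ne' hsb.ne' h_concave cd _ (sfun t)
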